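/- Monotonicity of rounding: for all triples D1 = (y1, m1, d1) and D2 = (y2, m2, d2) with 1 ≤ m1 ≤ 12, 1 ≤ m2 ≤ 12, d1 ≥ 1 and d2 ≥ 1, and every rounding mode r ∈ {↓, ↑}, if D1 < D2 then rnd_r(D1) ≤ rnd_r(D2). -/

import Mathlib

/-- A value is either a date `(y, m, d)` (a triple of integers in the
Gregorian calendar) or the error element `⊥`. -/
inductive DValue : Type
  | date (y m d : ℤ) : DValue
  | bot : DValue
deriving DecidableEq

/-- `nb_days(y, m)`: the number of days of month `m` in year `y`
(meaningful for `1 ≤ m ≤ 12`). A year is leap iff it is divisible by 4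
and not by 100, or divisible by 400. -/
def nbDays (y m : ℤ) : ℤ :=
  if m = 2 then (if (4 ∣ y ∧ ¬ (100 ∣ y)) ∨ 400 ∣ y then 29 else 28)
  else if m = 4 ∨ m = 6 ∨ m = 9 ∨ m = 11 then 30
  else 31

theorem nbDays_bounds (y m : ℤ) : 28 ≤ nbDays y m ∧ nbDays y m ≤ 31 := by
  unfold nbDays; split_ifs <;> omega

/-- A date `(y, m, d)` is valid iff `1 ≤ m ≤ 12` and `1 ≤ d ≤ nb_days(y, m)`. -/
def ValidDate (y m d : ℤ) : Prop :=
  1 ≤ m ∧ m ≤ 12 ∧ 1 ≤ d ∧ d ≤ nbDays y m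

/-- Year addition: `(y,m,d) +y n = (y+n,m,d)`; `⊥ +y n = ⊥`. -/
def DValue.addY : DValue → ℤ → DValue
  | .date y m d, n => .date (y + n) m d
  | .bot, _ => .bot

/-- Month addition on a date `(y, m, d)` (with `⊥` for a month component
outside `[1,12]`):
`(y,m,d) +m n = (y,m+n,d)` if `1 ≤ m+n ≤ 12`,
`= (y+1,m,d) +m (n−12)` if `m+n > 12`, `= (y−1,m,d) +m (n+12)` if `m+n < 1`. -/
def addMonths (y m d n : ℤ) : DValue :=
  if _h : 1 ≤ m ∧ m ≤ 12 then
    if _h1 : 1 ≤ m + n ∧ m + n ≤ 12 then .date y (m + n) d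
    else if _h2 : 12 < m + n then addMonths (y + 1) m d (n - 12)
    else addMonths (y - 1) m d (n + 12)
  else .bot
termination_by (m + n - 12).toNat + (1 - (m + n)).toNat
decreasing_by all_goals omega

/-- Month addition on values: `⊥ +m n = ⊥`. -/
def DValue.addM : DValue → ℤ → DValue
  | .date y m d, n => addMonths y m d n
  | .bot, _ => .bot

/-- Day addition, following the rules:
for `(y,m,d)` with `1 ≤ d ≤ nb_days(y,m)`:
`(y,m,d) +d n = (y,m,d+n)` if `1 ≤ d+n ≤ nb_days(y,m)`;
`= ((y,m,1) +m 1) +d (n − (nb_days(y,m) − d) − 1)` if `d+n > nb_days(y,m)`;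
`= (y,m,1) +d (d−1+n)` if `d+n ≤ 0` and `d > 1`;
if `n+1 ≤ 0` then, letting `(y',m',d') = (y,m,1) +m (−1)`,
`(y,m,1) +d n = (y',m',1) +d (n + nb_days(y',m'))`.
If `d < 1` or `d > nb_days(y,m)` (or the month is out of range), the result is `⊥`. -/
def addDays (y m d n : ℤ) : DValue :=
  if _hm : 1 ≤ m ∧ m ≤ 12 then
    if _hd : 1 ≤ d ∧ d ≤ nbDays y m then
      if _h1 : 1 ≤ d + n ∧ d + n ≤ nbDays y m then .date y m (d + n)
      else if _h2 : nbDays y m < d + n then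
        match addMonths y m 1 1 with
        | .date y' m' _ => addDays y' m' 1 (n - (nbDays y m - d) - 1)
        | .bot => .bot
      else if _h3 : 1 < d then addDays y m 1 (d - 1 + n)
      else
        match _hprev : addMonths y m 1 (-1) with
        | .date y' m' _ => addDays y' m' 1 (n + nbDays y' m')
        | .bot => .bot
    else .bot
  else .bot
termination_by (if 0 ≤ n then n else 62 - n).toNat
decreasing_by
  · split_ifs <;> omega
  · split_ifs <;> omega
  · have h28 := nbDays_bounds y' m'
    split_ifs <;> omega

/-- Day addition on values: `⊥ +d n = ⊥`. -/
def DValue.addD : DValue → ℤ → DValue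
  | .date y m d, n => addDays y m d n
  | .bot, _ => .bot

/-- Rounding modes: down (`↓`), up (`↑`) and error (`⊥`). -/
inductive RMode : Type
  | down | up | err
deriving DecidableEq

/-- Rounding `rnd_r`: if `1 ≤ d ≤ nb_days(y,m)` then `rnd_r(y,m,d) = (y,m,d)`;
if `d > nb_days(y,m)` then `rnd_↓(y,m,d) = (y,m,nb_days(y,m))`,
`rnd_↑(y,m,d) = (y',m',1)` where `(y',m',d') = (y,m,d) +m 1`, and
`rnd_⊥(y,m,d) = ⊥`; if `d < 1` then `rnd_r(y,m,d) = ⊥`; `rnd_r(⊥) = ⊥`. -/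
def rnd (r : RMode) : DValue → DValue
  | .date y m d =>
    if 1 ≤ d ∧ d ≤ nbDays y m then .date y m d
    else if d < 1 then .bot
    else
      match r with
      | .down => .date y m (nbDays y m)
      | .up =>
        match addMonths y m d 1 with
        | .date y' m' _ => .date y' m' 1
        | .bot => .bot
      | .err => .bot
  | .bot => .bot

/-- A period `(py, pm, pd)`: a number of years, months and days. -/
structure Period : Type where
  py : ℤ
  pm : ℤ
  pd : ℤ
deriving DecidableEq

/-- Derived addition of a period with rounding mode `r`:
`e +r (py, pm, pd) = rnd_r((e +y py) +m pm) +d pd`. -/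
def addPeriod (r : RMode) (e : DValue) (p : Period) : DValue :=
  ((rnd r ((e.addY p.py).addM p.pm)).addD p.pd)

/-- Strict lexicographic order on dates. -/
def DateLt (y1 m1 d1 y2 m2 d2 : ℤ) : Prop :=
  y1 < y2 ∨ (y1 = y2 ∧ (m1 < m2 ∨ (m1 = m2 ∧ d1 < d2)))

/-- Large lexicographic order on dates. -/
def DateLe (y1 m1 d1 y2 m2 d2 : ℤ) : Prop :=
  y1 < y2 ∨ (y1 = y2 ∧ (m1 < m2 ∨ (m1 = m2 ∧ d1 ≤ d2)))

/-- Comparison lifted to values: it holds only between two dates. -/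
def DValue.lt : DValue → DValue → Prop
  | .date y1 m1 d1, .date y2 m2 d2 => DateLt y1 m1 d1 y2 m2 d2
  | _, _ => False

/-- Comparison lifted to values: it holds only between two dates. -/
def DValue.le : DValue → DValue → Prop
  | .date y1 m1 d1, .date y2 m2 d2 => DateLe y1 m1 d1 y2 m2 d2
  | _, _ => False

/-- A value is a valid date: it is not `⊥` and its components are valid. -/
def IsValidDate : DValue → Prop
  | .date y m d => ValidDate y m d
  | .bot => False

def yearOf : DValue → ℤ
  | .date y _ _ => y
  | .bot => 0

def monthOf : DValue → ℤ
  | .date _ m _ => m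
  | .bot => 0

def dayOf : DValue → ℤ
  | .date _ _ d => d
  | .bot => 0

/-- Date units: year, month, day. -/
inductive DUnit : Type
  | year | month | day
deriving DecidableEq

/-- Addition of `n` units to a value. -/
def addU : DUnit → DValue → ℤ → DValue
  | .year, v, n => v.addY n
  | .month, v, n => v.addM n
  | .day, v, n => v.addD n

/-- Componentwise addition of periods. -/
def Period.add (p q : Period) : Period :=
  ⟨p.py + q.py, p.pm + q.pm, p.pd + q.pd⟩

/-!
For `D` with month in `[1, 12]` and day `≥ 1`, `rnd_↓ D` is the greatest valid date `≤ D` and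
`rnd_↑ D` is the least valid date `≥ D`. Monotonicity is a formal consequence: if `D₁ ≤ D₂`, then
`rnd_↓ D₁ ≤ D₁ ≤ D₂` is a valid date below `D₂`, hence below `rnd_↓ D₂`; dually,
`D₁ ≤ D₂ ≤ rnd_↑ D₂` makes `rnd_↑ D₂` a valid date above `D₁`, hence above `rnd_↑ D₁`.
-/

theorem DateLt.dateLe {y₁ m₁ d₁ y₂ m₂ d₂ : ℤ} (h : DateLt y₁ m₁ d₁ y₂ m₂ d₂) :
    DateLe y₁ m₁ d₁ y₂ m₂ d₂ := by
  unfold DateLt at h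
  unfold DateLe
  omega

theorem DateLe.trans {y₁ m₁ d₁ y₂ m₂ d₂ y₃ m₃ d₃ : ℤ} (h₁₂ : DateLe y₁ m₁ d₁ y₂ m₂ d₂)
    (h₂₃ : DateLe y₂ m₂ d₂ y₃ m₃ d₃) : DateLe y₁ m₁ d₁ y₃ m₃ d₃ := by
  unfold DateLe at *
  omega

theorem DValue.le.trans {u v w : DValue} (huv : u.le v) (hvw : v.le w) : u.le w :=
  match u, v, w, huv, hvw with
  | .date .., .date .., .date .., huv, hvw => DateLe.trans huv hvw

section

variable {y m d : ℤ}

theorem addMonths_one_of_lt_twelve (y d : ℤ) (hm : 1 ≤ m) (hm' : m < 12) :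
    addMonths y m d 1 = .date y (m + 1) d := by
  rw [addMonths, dif_pos (by omega), dif_pos (by omega)]

theorem addMonths_twelve_one (y d : ℤ) : addMonths y 12 d 1 = .date (y + 1) 1 d := by
  rw [addMonths, dif_pos (by omega), dif_neg (by omega), dif_pos (by omega),
    addMonths, dif_pos (by omega), dif_pos (by omega)]
  norm_num

theorem rnd_of_le_nbDays (r : RMode) (hd : 1 ≤ d) (hle : d ≤ nbDays y m) :
    rnd r (.date y m d) = .date y m d :=
  if_pos ⟨hd, hle⟩

theorem rnd_down_of_nbDays_lt (hlt : nbDays y m < d) :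
    rnd .down (.date y m d) = .date y m (nbDays y m) := by
  have hnb := nbDays_bounds y m
  rw [rnd, if_neg (by omega), if_neg (by omega)]

theorem rnd_up_of_nbDays_lt_of_lt_twelve (hm : 1 ≤ m) (hm' : m < 12) (hlt : nbDays y m < d) :
    rnd .up (.date y m d) = .date y (m + 1) 1 := by
  have hnb := nbDays_bounds y m
  rw [rnd, if_neg (by omega), if_neg (by omega), addMonths_one_of_lt_twelve y d hm hm']

theorem rnd_up_twelve_of_nbDays_lt (hlt : nbDays y 12 < d) :
    rnd .up (.date y 12 d) = .date (y + 1) 1 1 := by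
  have hnb := nbDays_bounds y 12
  rw [rnd, if_neg (by omega), if_neg (by omega), addMonths_twelve_one]

theorem validDate_nbDays (y : ℤ) (hm : 1 ≤ m) (hm' : m ≤ 12) : ValidDate y m (nbDays y m) :=
  ⟨hm, hm', by linarith [nbDays_bounds y m], le_rfl⟩

theorem validDate_one (y : ℤ) (hm : 1 ≤ m) (hm' : m ≤ 12) : ValidDate y m 1 :=
  ⟨hm, hm', le_rfl, by linarith [nbDays_bounds y m]⟩

theorem isValidDate_rnd_down (hm : 1 ≤ m) (hm' : m ≤ 12) (hd : 1 ≤ d) :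
    IsValidDate (rnd .down (.date y m d)) := by
  rcases le_or_gt d (nbDays y m) with hle | hlt
  · rw [rnd_of_le_nbDays _ hd hle]
    exact ⟨hm, hm', hd, hle⟩
  · rw [rnd_down_of_nbDays_lt hlt]
    exact validDate_nbDays y hm hm'

theorem rnd_down_le (hd : 1 ≤ d) : (rnd .down (.date y m d)).le (.date y m d) := by
  rcases le_or_gt d (nbDays y m) with hle | hlt
  · rw [rnd_of_le_nbDays _ hd hle]
    exact .inr ⟨rfl, .inr ⟨rfl, le_rfl⟩⟩
  · rw [rnd_down_of_nbDays_lt hlt]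
    exact .inr ⟨rfl, .inr ⟨rfl, hlt.le⟩⟩

theorem le_rnd_down {v : DValue} (hd : 1 ≤ d) (hv : IsValidDate v) (hvd : v.le (.date y m d)) :
    v.le (rnd .down (.date y m d)) := by
  rcases le_or_gt d (nbDays y m) with hle | hlt
  · rwa [rnd_of_le_nbDays _ hd hle]
  · rw [rnd_down_of_nbDays_lt hlt]
    obtain ⟨y', m', d'⟩ | _ := v
    · obtain ⟨-, -, -, hd'⟩ := hv
      rcases hvd with hy | ⟨rfl, hm | ⟨rfl, -⟩⟩
      · exact .inl hy
      · exact .inr ⟨rfl, .inl hm⟩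
      · exact .inr ⟨rfl, .inr ⟨rfl, hd'⟩⟩
    · exact hv.elim

theorem isValidDate_rnd_up (hm : 1 ≤ m) (hm' : m ≤ 12) (hd : 1 ≤ d) :
    IsValidDate (rnd .up (.date y m d)) := by
  rcases le_or_gt d (nbDays y m) with hle | hlt
  · rw [rnd_of_le_nbDays _ hd hle]
    exact ⟨hm, hm', hd, hle⟩
  · rcases hm'.lt_or_eq with hm' | rfl
    · rw [rnd_up_of_nbDays_lt_of_lt_twelve hm hm' hlt]
      exact validDate_one y (by omega) (by omega)
    · rw [rnd_up_twelve_of_nbDays_lt hlt]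
      exact validDate_one (y + 1) (by norm_num) (by norm_num)

theorem le_rnd_up (hm : 1 ≤ m) (hm' : m ≤ 12) (hd : 1 ≤ d) :
    (DValue.date y m d).le (rnd .up (.date y m d)) := by
  rcases le_or_gt d (nbDays y m) with hle | hlt
  · rw [rnd_of_le_nbDays _ hd hle]
    exact .inr ⟨rfl, .inr ⟨rfl, le_rfl⟩⟩
  · rcases hm'.lt_or_eq with hm' | rfl
    · rw [rnd_up_of_nbDays_lt_of_lt_twelve hm hm' hlt]
      exact .inr ⟨rfl, .inl (lt_add_one m)⟩
    · rw [rnd_up_twelve_of_nbDays_lt hlt]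
      exact .inl (lt_add_one y)

theorem ValidDate.month_lt_of_nbDays_lt {y' m' d' : ℤ} (hv : ValidDate y' m' d')
    (hlt : nbDays y m < d) (hle : DateLe y m d y' m' d') : y < y' ∨ y = y' ∧ m < m' := by
  obtain ⟨-, -, -, hd'⟩ := hv
  rcases hle with hy | ⟨rfl, hm | ⟨rfl, hd⟩⟩
  · exact .inl hy
  · exact .inr ⟨rfl, hm⟩
  · exact absurd (hd.trans hd') hlt.not_ge

theorem rnd_up_le {v : DValue} (hm : 1 ≤ m) (hm' : m ≤ 12) (hd : 1 ≤ d) (hv : IsValidDate v)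
    (hdv : (DValue.date y m d).le v) : (rnd .up (.date y m d)).le v := by
  rcases le_or_gt d (nbDays y m) with hle | hlt
  · rwa [rnd_of_le_nbDays _ hd hle]
  · obtain ⟨y', m', d'⟩ | _ := v
    · have hlater : y < y' ∨ y = y' ∧ m < m' := hv.month_lt_of_nbDays_lt hlt hdv
      obtain ⟨hv_month, hv_month', hv_day, -⟩ := hv
      rcases hm'.lt_or_eq with hm' | rfl
      · rw [rnd_up_of_nbDays_lt_of_lt_twelve hm hm' hlt]
        simp only [DValue.le, DateLe]
        omega
      · rw [rnd_up_twelve_of_nbDays_lt hlt]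
        simp only [DValue.le, DateLe]
        omega
    · exact hv.elim

end

section

variable {y₁ m₁ d₁ y₂ m₂ d₂ : ℤ}

theorem rnd_down_mono (hm₁ : 1 ≤ m₁) (hm₁' : m₁ ≤ 12) (hd₁ : 1 ≤ d₁) (hd₂ : 1 ≤ d₂)
    (hle : (DValue.date y₁ m₁ d₁).le (.date y₂ m₂ d₂)) :
    (rnd .down (.date y₁ m₁ d₁)).le (rnd .down (.date y₂ m₂ d₂)) :=
  le_rnd_down hd₂ (isValidDate_rnd_down hm₁ hm₁' hd₁) ((rnd_down_le hd₁).trans hle)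

theorem rnd_up_mono (hm₁ : 1 ≤ m₁) (hm₁' : m₁ ≤ 12) (hm₂ : 1 ≤ m₂) (hm₂' : m₂ ≤ 12)
    (hd₁ : 1 ≤ d₁) (hd₂ : 1 ≤ d₂) (hle : (DValue.date y₁ m₁ d₁).le (.date y₂ m₂ d₂)) :
    (rnd .up (.date y₁ m₁ d₁)).le (rnd .up (.date y₂ m₂ d₂)) :=
  rnd_up_le hm₁ hm₁' hd₁ (isValidDate_rnd_up hm₂ hm₂' hd₂) (hle.trans (le_rnd_up hm₂ hm₂' hd₂))

end

/-- **Monotonicity of rounding**: for all triples `D1 = (y1, m1, d1)` and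
`D2 = (y2, m2, d2)` with month components in `[1, 12]` and day components `≥ 1`,
and every rounding mode `r ∈ {↓, ↑}`, if `D1 < D2` then `rnd_r(D1) ≤ rnd_r(D2)`. -/
theorem monotonicity_rounding (y1 m1 d1 y2 m2 d2 : ℤ)
    (hm1 : 1 ≤ m1) (hm1' : m1 ≤ 12) (hm2 : 1 ≤ m2) (hm2' : m2 ≤ 12)
    (hd1 : 1 ≤ d1) (hd2 : 1 ≤ d2)
    (r : RMode) (hr : r = RMode.down ∨ r = RMode.up)
    (hlt : DateLt y1 m1 d1 y2 m2 d2) :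
    DValue.le (rnd r (DValue.date y1 m1 d1)) (rnd r (DValue.date y2 m2 d2)) := by
  rcases hr with rfl | rfl
  · exact rnd_down_mono hm1 hm1' hd1 hd2 hlt.dateLe
  · exact rnd_up_mono hm1 hm1' hm2 hm2' hd1 hd2 hlt.dateLe
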